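/- Let L ≥ 1 be an integer and X ∈ ℝ^{m×n}, and fix intermediate dimensions d_1, …, d_{L−1} each satisfying d_i ≥ min{m,n} (with d_0 := n and d_L := m). Then ‖X‖_{S^{2/L}}^{2/L} = min { (1/L)·Σ_{i=1}^L ‖W_i‖_F² : W_i ∈ ℝ^{d_i × d_{i−1}} for i = 1, …, L and W_L·W_{L−1}···W_1 = X }, and the minimum is attained. -/

import Mathlib

open Matrix

/-- The `i`-th largest singular value of a real matrix `A` (`0`-indexed),
i.e. the non-increasing rearrangement of the square roots of the
eigenvalues of the positive semidefinite matrix `Aᵀ A`. -/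
noncomputable def singularValue {m n : ℕ} (A : Matrix (Fin m) (Fin n) ℝ) (i : Fin (min m n)) : ℝ :=
  let ev : Fin n → ℝ := fun j => Real.sqrt ((Matrix.isHermitian_conjTranspose_mul_self A).eigenvalues j)
  (ev ∘ Tuple.sort ev) ((Fin.castLE (Nat.min_le_right m n) i).rev)

/-- Frobenius norm of a real matrix. -/
noncomputable def frobNorm {m n : ℕ} (A : Matrix (Fin m) (Fin n) ℝ) : ℝ :=
  Real.sqrt (∑ i, ∑ j, (A i j) ^ 2)

/-- `‖A‖_{S^q}^q = ∑_{i=1}^{min m n} σ_i(A)^q`. -/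
noncomputable def schattenPow {m n : ℕ} (A : Matrix (Fin m) (Fin n) ℝ) (q : ℝ) : ℝ :=
  ∑ i : Fin (min m n), (singularValue A i) ^ q

/-- Schatten-`q` quasi-norm `‖A‖_{S^q} = (∑ σ_i(A)^q)^{1/q}`. -/
noncomputable def schattenNorm {m n : ℕ} (A : Matrix (Fin m) (Fin n) ℝ) (q : ℝ) : ℝ :=
  (schattenPow A q) ^ (1 / q)

/-- `chainProd d W L = W_{L-1} * ⋯ * W_1 * W_0` (the end-to-end product of the
first `L` layers, `W_i : ℝ^{d_{i+1} × d_i}`). -/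
noncomputable def chainProd (d : ℕ → ℕ) (W : ∀ i : ℕ, Matrix (Fin (d (i + 1))) (Fin (d i)) ℝ) :
    (L : ℕ) → Matrix (Fin (d L)) (Fin (d 0)) ℝ
  | 0 => 1
  | (L + 1) => W L * chainProd d W L

/-- The ℓ²-regularized deep matrix factorization objective
`𝓛(W) = ‖M♮ − W_L ⋯ W_1‖_F² + (λ/L) ∑ᵢ ‖W_i‖_F²`. -/
noncomputable def deepLoss (L : ℕ) (lam : ℝ) (d : ℕ → ℕ)
    (Mnat : Matrix (Fin (d L)) (Fin (d 0)) ℝ)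
    (W : ∀ i : ℕ, Matrix (Fin (d (i + 1))) (Fin (d i)) ℝ) : ℝ :=
  frobNorm (Mnat - chainProd d W L) ^ 2 + (lam / L) * ∑ i : Fin L, frobNorm (W i.1) ^ 2

/-- The Schatten-regularized objective
`𝓛_{M♮}(M) = ‖M♮ − M‖_F² + λ‖M‖_{S^{2/L}}^{2/L}`. -/
noncomputable def schattenLoss (L : ℕ) (lam : ℝ) {m n : ℕ}
    (Mnat M : Matrix (Fin m) (Fin n) ℝ) : ℝ :=
  frobNorm (Mnat - M) ^ 2 + lam * schattenPow M (2 / L)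

open InnerProductSpace in
theorem gs_sub_mem {G : Type*} [NormedAddCommGroup G] [InnerProductSpace ℝ G] {n : ℕ}
    (z : Fin n → G) (i : Fin n) :
    z i - gramSchmidt ℝ z i ∈ Submodule.span ℝ (z '' Set.Iio i) := by
  rw [← span_gramSchmidt_Iio ℝ z i, gramSchmidt_def]
  simp only [sub_sub_cancel]
  refine Submodule.sum_mem _ fun j hj => ?_
  rw [Submodule.starProjection_singleton]
  exact Submodule.smul_mem _ _ (Submodule.subset_span ⟨j, by simpa using hj, rfl⟩)

open InnerProductSpace in
theorem gs_map {E F : Type*} [NormedAddCommGroup E] [InnerProductSpace ℝ E]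
    [NormedAddCommGroup F] [InnerProductSpace ℝ F] {n : ℕ} (T : E →ₗ[ℝ] F) (x : Fin n → E)
    (i : Fin n) :
    ‖gramSchmidt ℝ (fun j => T (x j)) i‖ =
      inner ℝ (gramSchmidtNormed ℝ (fun j => T (x j)) i) (T (gramSchmidtNormed ℝ x i))
        * ‖gramSchmidt ℝ x i‖ := by
  set y := fun j => T (x j) with hy
  have h1 : ∀ w ∈ Submodule.span ℝ (y '' Set.Iio i), inner ℝ (gramSchmidt ℝ y i) w = 0 := by
    intro w hw
    induction hw using Submodule.span_induction with
    | mem w hw =>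
      obtain ⟨j, hj, rfl⟩ := hw
      exact gramSchmidt_inv_triangular ℝ y hj
    | zero => simp
    | add a b _ _ ha hb => rw [inner_add_right, ha, hb, add_zero]
    | smul c a _ ha => rw [inner_smul_right, ha, mul_zero]
  have h2 : inner ℝ (gramSchmidt ℝ y i) (y i - T (gramSchmidt ℝ x i)) = 0 := by
    apply h1
    have := Submodule.mem_map_of_mem (f := T) (gs_sub_mem x i)
    rw [Submodule.map_span, map_sub, ← Set.image_comp] at this
    exact this
  have h3 : inner ℝ (gramSchmidt ℝ y i) (y i - gramSchmidt ℝ y i) = 0 := h1 _ (by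
    have := gs_sub_mem y i
    exact this)
  rw [inner_sub_right, sub_eq_zero] at h2 h3
  have h4 : inner ℝ (gramSchmidt ℝ y i) (T (gramSchmidt ℝ x i)) = ‖gramSchmidt ℝ y i‖ ^ 2 := by
    rw [← h2, h3, real_inner_self_eq_norm_sq]
  simp only [gramSchmidtNormed, map_smul, inner_smul_left, inner_smul_right]
  rw [h4]
  by_cases hx : gramSchmidt ℝ x i = 0
  · rw [hx, map_zero, inner_zero_right] at h4
    have h5 : gramSchmidt ℝ y i = 0 := by simpa using h4.symm
    simp [hx, h5]
  · by_cases hyy : gramSchmidt ℝ y i = 0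
    · simp [hyy]
    · have a1 : ‖gramSchmidt ℝ x i‖ ≠ 0 := by simpa using hx
      have a2 : ‖gramSchmidt ℝ y i‖ ≠ 0 := by simpa using hyy
      simp
      field_simp

open InnerProductSpace in
theorem gsn_bessel {E : Type*} [NormedAddCommGroup E] [InnerProductSpace ℝ E] {n : ℕ}
    (x : Fin n → E) (w : E) :
    ∑ i, (inner ℝ (gramSchmidtNormed ℝ x i) w) ^ 2 ≤ ‖w‖ ^ 2 := by
  classical
  have h := (gramSchmidtNormed_orthonormal' (𝕜 := ℝ) x).sum_inner_products_le
    (x := w) (s := Finset.univ)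
  refine le_trans (le_of_eq ?_) h
  simp only [Real.norm_eq_abs, sq_abs]
  rw [← Finset.sum_subtype (p := fun i => i ∈ { i | gramSchmidtNormed ℝ x i ≠ 0 })
    (Finset.univ.filter fun i => gramSchmidtNormed ℝ x i ≠ 0) (by simp)
    (fun i => (inner ℝ (gramSchmidtNormed ℝ x i) w) ^ 2), Finset.sum_filter]
  apply Finset.sum_congr rfl
  intro i _
  split_ifs with h
  · rfl
  · simp at h; simp [h]

open InnerProductSpace in
theorem gsn_norm_le {E : Type*} [NormedAddCommGroup E] [InnerProductSpace ℝ E] {n : ℕ}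
    (x : Fin n → E) (i : Fin n) : ‖gramSchmidtNormed ℝ x i‖ ≤ 1 := by
  by_cases h : gramSchmidtNormed ℝ x i = 0
  · simp [h]
  · exact (gramSchmidtNormed_unit_length' h).le

theorem frob_sq {m n : ℕ} (A : Matrix (Fin m) (Fin n) ℝ) :
    frobNorm A ^ 2 = ∑ i, ∑ j, (A i j) ^ 2 := by
  unfold frobNorm
  rw [Real.sq_sqrt (by positivity)]

open InnerProductSpace in
theorem frob_bound {m n k : ℕ} (A : Matrix (Fin m) (Fin n) ℝ)
    (x : Fin k → EuclideanSpace ℝ (Fin n)) (y : Fin k → EuclideanSpace ℝ (Fin m)) :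
    ∑ i, (inner ℝ (gramSchmidtNormed ℝ y i) (A.toEuclideanLin (gramSchmidtNormed ℝ x i))) ^ 2
      ≤ frobNorm A ^ 2 := by
  rw [frob_sq]
  calc _ ≤ ∑ i, ‖A.toEuclideanLin (gramSchmidtNormed ℝ x i)‖ ^ 2 := by
        refine Finset.sum_le_sum fun i _ => ?_
        rw [← sq_abs]
        have := abs_real_inner_le_norm (gramSchmidtNormed ℝ y i)
          (A.toEuclideanLin (gramSchmidtNormed ℝ x i))
        have h1 := gsn_norm_le y i
        gcongr
        refine this.trans ?_
        exact mul_le_of_le_one_left (norm_nonneg _) h1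
    _ = ∑ a, ∑ i, (inner ℝ (gramSchmidtNormed ℝ x i) (WithLp.toLp 2 (A a))) ^ 2 := by
        rw [Finset.sum_comm]
        refine Finset.sum_congr rfl fun i _ => ?_
        rw [EuclideanSpace.real_norm_sq_eq]
        refine Finset.sum_congr rfl fun a _ => ?_
        rw [EuclideanSpace.inner_eq_star_dotProduct]
        simp [Matrix.mulVec, dotProduct]
    _ ≤ _ := by
        refine Finset.sum_le_sum fun a _ => ?_
        refine (gsn_bessel x _).trans (le_of_eq ?_)
        rw [EuclideanSpace.real_norm_sq_eq]

/-- eigenvectors and eigenvalues -/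
theorem gram_inner {m n : ℕ} (X : Matrix (Fin m) (Fin n) ℝ) (i j : Fin n) :
    (X *ᵥ ⇑((isHermitian_conjTranspose_mul_self X).eigenvectorBasis i)) ⬝ᵥ
      (X *ᵥ ⇑((isHermitian_conjTranspose_mul_self X).eigenvectorBasis j)) =
    if i = j then (isHermitian_conjTranspose_mul_self X).eigenvalues j else 0 := by
  set h := isHermitian_conjTranspose_mul_self X
  have h1 := h.mulVec_eigenvectorBasis j
  have h2 := orthonormal_iff_ite.1 h.eigenvectorBasis.orthonormal j i
  rw [EuclideanSpace.inner_eq_star_dotProduct] at h2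
  rw [dotProduct_mulVec, ← mulVec_transpose, mulVec_mulVec, dotProduct_comm]
  have h3 := h.mulVec_eigenvectorBasis i
  rw [← conjTranspose_eq_transpose_of_trivial, h3, dotProduct_smul, dotProduct_comm]
  simp only [star_trivial] at h2
  rw [h2]
  by_cases hij : i = j
  · subst hij; simp
  · simp [hij, Ne.symm hij]

noncomputable def kIdx {m n : ℕ} (X : Matrix (Fin m) (Fin n) ℝ) (i : Fin (min m n)) : Fin n :=
  Tuple.sort (fun j => Real.sqrt ((isHermitian_conjTranspose_mul_self X).eigenvalues j))
    ((Fin.castLE (Nat.min_le_right m n) i).rev)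

theorem sv_eq {m n : ℕ} (X : Matrix (Fin m) (Fin n) ℝ) (i : Fin (min m n)) :
    singularValue X i =
      Real.sqrt ((isHermitian_conjTranspose_mul_self X).eigenvalues (kIdx X i)) := rfl

theorem kIdx_inj {m n : ℕ} (X : Matrix (Fin m) (Fin n) ℝ) : Function.Injective (kIdx X) := by
  intro a b h
  unfold kIdx at h
  have := Fin.rev_injective ((Equiv.injective _) h)
  exact Fin.castLE_injective _ this

theorem eig_zero {m n : ℕ} (X : Matrix (Fin m) (Fin n) ℝ) (t : Fin n)
    (ht : t ∉ Set.range (kIdx X)) :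
    (isHermitian_conjTranspose_mul_self X).eigenvalues t = 0 := by
  set h := isHermitian_conjTranspose_mul_self X with hh
  set ev : Fin n → ℝ := fun j => Real.sqrt (h.eigenvalues j) with hev
  by_contra hne
  have hnn : ∀ j, 0 ≤ h.eigenvalues j := (posSemidef_conjTranspose_mul_self X).eigenvalues_nonneg
  have hpos : 0 < ev t := Real.sqrt_pos.2 (lt_of_le_of_ne (hnn t) (Ne.symm hne))
  obtain ⟨p, rfl⟩ := (Tuple.sort ev).surjective t
  have hp : min m n ≤ p.rev.val := by
    by_contra hlt
    push Not at hlt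
    apply ht
    refine ⟨⟨p.rev.val, hlt⟩, ?_⟩
    have : (Fin.castLE (Nat.min_le_right m n) ⟨p.rev.val, hlt⟩).rev = p := by
      have : Fin.castLE (Nat.min_le_right m n) ⟨p.rev.val, hlt⟩ = p.rev := rfl
      rw [this, Fin.rev_rev]
    show Tuple.sort ev _ = _
    rw [this]
  have hm : m ≤ p.rev.val := by
    have := p.rev.isLt
    omega
  have hrank : Fintype.card {i // h.eigenvalues i ≠ 0} ≤ m := by
    rw [← h.rank_eq_card_non_zero_eigs]
    rw [rank_conjTranspose_mul_self]
    simpa using X.rank_le_height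
  have hq : ∀ q ∈ Finset.Ici p, h.eigenvalues (Tuple.sort ev q) ≠ 0 := by
    intro q hq h0
    have hmono := Tuple.monotone_sort ev (Finset.mem_Ici.1 hq)
    simp only [Function.comp] at hmono
    have : ev (Tuple.sort ev q) = 0 := by
      show Real.sqrt (h.eigenvalues (Tuple.sort ev q)) = 0
      rw [h0, Real.sqrt_zero]
    linarith
  have hcard : (Finset.Ici p).card ≤ Fintype.card {i // h.eigenvalues i ≠ 0} := by
    rw [Fintype.card_subtype]
    refine Finset.card_le_card_of_injOn (Tuple.sort ev) (fun q hq' => ?_)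
      ((Equiv.injective _).injOn)
    simpa using hq q hq'
  rw [Fin.card_Ici] at hcard
  rw [Fin.val_rev] at hm
  have := p.isLt
  omega

theorem schatten_le {m n : ℕ} (X : Matrix (Fin m) (Fin n) ℝ) (q : ℝ) :
    schattenPow X q ≤
      ∑ j, Real.sqrt ((isHermitian_conjTranspose_mul_self X).eigenvalues j) ^ q := by
  unfold schattenPow
  simp only [sv_eq]
  rw [← Finset.sum_image (f := fun j =>
    Real.sqrt ((isHermitian_conjTranspose_mul_self X).eigenvalues j) ^ q)
    (fun a _ b _ hab => kIdx_inj X hab)]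
  exact Finset.sum_le_sum_of_subset_of_nonneg (Finset.subset_univ _)
    (fun _ _ _ => Real.rpow_nonneg (Real.sqrt_nonneg _) _)

open InnerProductSpace in
theorem lower_bound (L : ℕ) (hL : 1 ≤ L) (d : ℕ → ℕ)
    (W : ∀ i : ℕ, Matrix (Fin (d (i + 1))) (Fin (d i)) ℝ) :
    schattenPow (chainProd d W L) (2 / L) ≤
      (1 / L : ℝ) * ∑ i : Fin L, frobNorm (W i.1) ^ 2 := by
  refine (schatten_le _ _).trans ?_
  set X := chainProd d W L with hX
  set h := isHermitian_conjTranspose_mul_self X with hh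
  let x : ∀ k : ℕ, Fin (d 0) → EuclideanSpace ℝ (Fin (d k)) :=
    fun k i => (chainProd d W k).toEuclideanLin (h.eigenvectorBasis i)
  let ρ : ℕ → Fin (d 0) → ℝ := fun k i =>
    inner ℝ (gramSchmidtNormed ℝ (x (k+1)) i) ((W k).toEuclideanLin (gramSchmidtNormed ℝ (x k) i))
  have hx : ∀ k, x (k+1) = fun i => (W k).toEuclideanLin (x k i) := by
    intro k
    funext i
    simp [x, chainProd, Matrix.mulVec_mulVec]
  have hprod : ∀ k i, ‖gramSchmidt ℝ (x k) i‖ = ∏ j ∈ Finset.range k, ρ j i := by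
    intro k i
    induction k with
    | zero =>
      have hx0 : x 0 = fun i => h.eigenvectorBasis i := by
        funext i; simp [x, chainProd]
      rw [hx0, gramSchmidt_of_orthogonal ℝ]
      · simp
      · intro a b hab
        exact h.eigenvectorBasis.orthonormal.2 hab
    | succ k ih =>
      rw [Finset.prod_range_succ, ← ih, mul_comm]
      have := gs_map (W k).toEuclideanLin (x k) i
      rw [← hx k] at this
      exact this
  have hxin : ∀ i j, inner ℝ (x L i) (x L j) = if j = i then h.eigenvalues i else 0 := by
    intro i j
    rw [EuclideanSpace.inner_eq_star_dotProduct]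
    simpa [x] using gram_inner X j i
  have hL' : ∀ i, Real.sqrt (h.eigenvalues i) ^ 2 = ∏ j : Fin L, ρ j.1 i ^ 2 := by
    intro i
    have h1 := hprod L i
    rw [gramSchmidt_of_orthogonal ℝ] at h1
    · rw [Real.sq_sqrt ((posSemidef_conjTranspose_mul_self X).eigenvalues_nonneg i),
        Finset.prod_pow, Fin.prod_univ_eq_prod_range (fun j => ρ j i) L, ← h1,
        ← real_inner_self_eq_norm_sq, hxin]
      simp
    · intro a b hab
      show inner ℝ (x L a) (x L b) = 0
      rw [hxin, if_neg hab.symm]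
  have hLpos : (0:ℝ) < L := by exact_mod_cast hL
  calc _ ≤ ∑ i, ∑ j : Fin L, (1 / L : ℝ) * ρ j.1 i ^ 2 := by
        refine Finset.sum_le_sum fun i _ => ?_
        have e : Real.sqrt (h.eigenvalues i) ^ (2 / L : ℝ) =
            ∏ j : Fin L, (ρ j.1 i ^ 2) ^ (1 / L : ℝ) := by
          rw [Real.finsetProd_rpow _ _ (fun _ _ => sq_nonneg _), ← hL' i,
            ← Real.rpow_natCast, ← Real.rpow_mul (Real.sqrt_nonneg _)]
          congr 1
          push_cast
          ring
        rw [e]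
        refine Real.geom_mean_le_arith_mean_weighted _ _ _ (fun _ _ => by positivity) ?_
          (fun _ _ => sq_nonneg _)
        simp
        field_simp
    _ = (1 / L : ℝ) * ∑ j : Fin L, ∑ i, ρ j.1 i ^ 2 := by
        rw [Finset.sum_comm, Finset.mul_sum]
        simp only [Finset.mul_sum]
    _ ≤ _ := by
        gcongr with j _
        exact frob_bound (W j.1) _ _

theorem X_decomp {m n : ℕ} (X : Matrix (Fin m) (Fin n) ℝ) :
    X = ∑ i, vecMulVec (X *ᵥ ⇑((isHermitian_conjTranspose_mul_self X).eigenvectorBasis (kIdx X i)))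
      ⇑((isHermitian_conjTranspose_mul_self X).eigenvectorBasis (kIdx X i)) := by
  set h := isHermitian_conjTranspose_mul_self X with hh
  have h1 : X = ∑ t, vecMulVec (X *ᵥ ⇑(h.eigenvectorBasis t)) ⇑(h.eigenvectorBasis t) := by
    have h2 : (h.eigenvectorUnitary : Matrix (Fin n) (Fin n) ℝ) *
      star (h.eigenvectorUnitary : Matrix (Fin n) (Fin n) ℝ) = 1 := by simp
    conv_lhs => rw [← Matrix.mul_one X, ← h2, ← Matrix.mul_assoc]
    ext a c
    rw [Matrix.mul_apply, Matrix.sum_apply]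
    refine Finset.sum_congr rfl fun t _ => ?_
    simp [vecMulVec_apply, Matrix.mul_apply, mulVec, dotProduct, Matrix.star_apply]
  conv_lhs => rw [h1]
  rw [← Finset.sum_image (f := fun t => vecMulVec (X *ᵥ ⇑(h.eigenvectorBasis t))
    ⇑(h.eigenvectorBasis t)) (fun a _ b _ hab => kIdx_inj X hab)]
  symm
  refine Finset.sum_subset (Finset.subset_univ _) fun t _ ht => ?_
  have h0 := eig_zero X t (by simpa using ht)
  have h3 := gram_inner X t t
  rw [if_pos rfl, h0, dotProduct_self_eq_zero] at h3
  rw [h3]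
  ext; simp [vecMulVec_apply]

theorem chain_rank_one (r : ℕ) (d : ℕ → ℕ) (a : ∀ j, Fin r → Fin (d j) → ℝ) (s : Fin r → ℝ)
    (L : ℕ) (ho : ∀ j, 1 ≤ j → j < L → ∀ i i', a j i ⬝ᵥ a j i' = if i = i' then 1 else 0)
    (k : ℕ) (hk : k + 1 ≤ L) :
    chainProd d (fun j => ∑ i, s i • vecMulVec (a (j+1) i) (a j i)) (k+1) =
      ∑ i, s i ^ (k+1) • vecMulVec (a (k+1) i) (a 0 i) := by
  induction k with
  | zero => simp [chainProd]
  | succ k ih =>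
    rw [chainProd, ih (by omega), Matrix.sum_mul]
    refine Finset.sum_congr rfl fun i _ => ?_
    rw [Matrix.mul_sum]
    rw [Finset.sum_eq_single i]
    · rw [Matrix.smul_mul, Matrix.mul_smul, vecMulVec_mul_vecMulVec, ho _ (by omega) (by omega)]
      simp [smul_smul, pow_succ']
    · intro b _ hb
      rw [Matrix.smul_mul, Matrix.mul_smul, vecMulVec_mul_vecMulVec, ho _ (by omega) (by omega)]
      rw [if_neg hb.symm]
      ext p q
      simp [vecMulVec_apply]
    · simp

theorem frob_rank_one {r m n : ℕ} (u : Fin r → Fin m → ℝ) (v : Fin r → Fin n → ℝ) (s : Fin r → ℝ)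
    (hv : ∀ i i', v i ⬝ᵥ v i' = if i = i' then 1 else 0) (hu : ∀ i, u i ⬝ᵥ u i ≤ 1) :
    frobNorm (∑ i, s i • vecMulVec (u i) (v i)) ^ 2 ≤ ∑ i, s i ^ 2 := by
  rw [frob_sq]
  have h1 : ∀ a, ∑ c, ((∑ i, s i • vecMulVec (u i) (v i)) a c) ^ 2 = ∑ i, (s i * u i a) ^ 2 := by
    intro a
    have : ∀ c, ((∑ i, s i • vecMulVec (u i) (v i)) a c) ^ 2 =
        ∑ i, ∑ i', (s i * u i a) * (s i' * u i' a) * (v i c * v i' c) := by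
      intro c
      rw [Matrix.sum_apply, sq, Finset.sum_mul_sum]
      refine Finset.sum_congr rfl fun i _ => Finset.sum_congr rfl fun i' _ => ?_
      simp [vecMulVec_apply]
      ring
    simp only [this]
    rw [Finset.sum_comm]
    refine Finset.sum_congr rfl fun i _ => ?_
    rw [Finset.sum_comm]
    simp only [← Finset.mul_sum]
    have hv' : ∀ i', ∑ c, v i c * v i' c = if i = i' then 1 else 0 := fun i' => hv i i'
    simp only [hv']
    simp [sq]
  simp only [h1]
  rw [Finset.sum_comm]
  refine Finset.sum_le_sum fun i _ => ?_
  have : ∑ a, (s i * u i a) ^ 2 = s i ^ 2 * (u i ⬝ᵥ u i) := by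
    rw [dotProduct, Finset.mul_sum]
    exact Finset.sum_congr rfl fun _ _ => by ring
  rw [this]
  exact mul_le_of_le_one_right (sq_nonneg _) (hu i)

theorem attain (L : ℕ) (hL : 1 ≤ L) (d : ℕ → ℕ)
    (hdim : ∀ i : ℕ, 1 ≤ i → i ≤ L - 1 → min (d L) (d 0) ≤ d i)
    (X : Matrix (Fin (d L)) (Fin (d 0)) ℝ) :
    ∃ W : ∀ i : ℕ, Matrix (Fin (d (i + 1))) (Fin (d i)) ℝ,
        chainProd d W L = X ∧
        (1 / L : ℝ) * ∑ i : Fin L, frobNorm (W i.1) ^ 2 ≤ schattenPow X (2 / L) := by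
  set h := isHermitian_conjTranspose_mul_self X with hh
  have hLpos : (0:ℝ) < L := by exact_mod_cast hL
  have hsv : ∀ i, 0 ≤ singularValue X i := fun i => by rw [sv_eq]; exact Real.sqrt_nonneg _
  have hnn := (posSemidef_conjTranspose_mul_self X).eigenvalues_nonneg
  let v : Fin (min (d L) (d 0)) → Fin (d 0) → ℝ := fun i => ⇑(h.eigenvectorBasis (kIdx X i))
  let u : Fin (min (d L) (d 0)) → Fin (d L) → ℝ := fun i => (singularValue X i)⁻¹ • (X *ᵥ v i)
  let e : ∀ j, Fin (min (d L) (d 0)) → Fin (d j) → ℝ := fun j i t => if t.val = i.val then 1 else 0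
  let a : ∀ j, Fin (min (d L) (d 0)) → Fin (d j) → ℝ :=
    Function.update (Function.update e 0 v) L u
  have hXv : ∀ i, (X *ᵥ v i) ⬝ᵥ (X *ᵥ v i) = singularValue X i ^ 2 := by
    intro i
    have := gram_inner X (kIdx X i) (kIdx X i)
    rw [if_pos rfl] at this
    rw [sv_eq, Real.sq_sqrt (hnn _)]
    exact this
  have haL : a L = u := by simp [a]
  have ha0 : a 0 = v := by
    have : (0:ℕ) ≠ L := by omega
    simp [a, Function.update_of_ne this]
  have haj : ∀ j, 1 ≤ j → j < L → a j = e j := by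
    intro j h1 h2
    have h3 : j ≠ 0 := by omega
    have h4 : j ≠ L := by omega
    simp [a, Function.update_of_ne h3, Function.update_of_ne h4]
  have hu : ∀ i, u i ⬝ᵥ u i ≤ 1 := by
    intro i
    simp only [u, smul_dotProduct, dotProduct_smul, hXv, smul_eq_mul]
    by_cases h0 : singularValue X i = 0
    · simp [h0]
    · field_simp; rfl
  have hv : ∀ i i', v i ⬝ᵥ v i' = if i = i' then 1 else 0 := by
    intro i i'
    have h2 := orthonormal_iff_ite.1 h.eigenvectorBasis.orthonormal (kIdx X i') (kIdx X i)
    rw [EuclideanSpace.inner_eq_star_dotProduct] at h2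
    simp only [star_trivial, (kIdx_inj X).eq_iff] at h2
    simp only [v]
    rw [h2]
    simp [eq_comm]
  have he : ∀ j, 1 ≤ j → j < L → ∀ i i', e j i ⬝ᵥ e j i' = if i = i' then 1 else 0 := by
    intro j h1 h2 i i'
    have hd := hdim j h1 (by omega)
    have hlt : i.val < d j := lt_of_lt_of_le i.isLt hd
    rw [dotProduct, Finset.sum_eq_single ⟨i.val, hlt⟩]
    · simp [e, Fin.ext_iff]
    · intro b _ hb
      have : b.val ≠ i.val := fun hc => hb (Fin.ext hc)
      simp [e, this]
    · simp
  have ho : ∀ j, 1 ≤ j → j < L → ∀ i i', a j i ⬝ᵥ a j i' = if i = i' then 1 else 0 := by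
    intro j h1 h2
    rw [haj j h1 h2]
    exact he j h1 h2
  have ho' : ∀ j, j < L → ∀ i i', a j i ⬝ᵥ a j i' = if i = i' then 1 else 0 := by
    intro j h2
    rcases Nat.eq_zero_or_pos j with rfl | h1
    · rw [ha0]; exact hv
    · exact ho j h1 h2
  have hn : ∀ j, 1 ≤ j → j ≤ L → ∀ i, a j i ⬝ᵥ a j i ≤ 1 := by
    intro j h1 h2 i
    rcases h2.lt_or_eq with h3 | rfl
    · rw [ho j h1 h3]; simp
    · rw [haL]; exact hu i
  let s : Fin (min (d L) (d 0)) → ℝ := fun i => singularValue X i ^ (1 / L : ℝ)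
  refine ⟨fun j => ∑ i, s i • vecMulVec (a (j+1) i) (a j i), ?_, ?_⟩
  · obtain ⟨k, rfl⟩ : ∃ k, L = k + 1 := ⟨L - 1, by omega⟩
    rw [chain_rank_one _ d a s (k+1) ho k le_rfl, haL, ha0]
    conv_rhs => rw [X_decomp X]
    refine Finset.sum_congr rfl fun i _ => ?_
    have hs : s i ^ (k+1) = singularValue X i := by
      simp only [s]
      rw [← Real.rpow_natCast, ← Real.rpow_mul (hsv i), one_div, inv_mul_cancel₀ hLpos.ne',
        Real.rpow_one]
    rw [hs]
    by_cases h0 : singularValue X i = 0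
    · have h3 := hXv i
      rw [h0, zero_pow two_ne_zero, dotProduct_self_eq_zero] at h3
      have h4 : X *ᵥ ⇑(h.eigenvectorBasis (kIdx X i)) = 0 := h3
      rw [h0, h4]
      ext; simp [vecMulVec_apply]
    · ext p q
      simp only [Matrix.smul_apply, vecMulVec_apply, u, Pi.smul_apply, smul_eq_mul]
      field_simp
      rfl
  · have hb : ∀ j : Fin L, frobNorm (∑ i, s i • vecMulVec (a (j.1+1) i) (a j.1 i)) ^ 2 ≤
        schattenPow X (2 / L) := by
      intro j
      refine (frob_rank_one _ _ s (ho' j.1 j.2) (hn _ (by omega) j.2)).trans (le_of_eq ?_)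
      unfold schattenPow
      refine Finset.sum_congr rfl fun i _ => ?_
      simp only [s]
      rw [← Real.rpow_natCast, ← Real.rpow_mul (hsv i)]
      congr 1
      push_cast
      ring
    have := Finset.sum_le_sum (s := Finset.univ) fun j _ => hb j
    rw [Finset.sum_const, Finset.card_univ, Fintype.card_fin, nsmul_eq_mul] at this
    calc _ ≤ (1 / L : ℝ) * (L * schattenPow X (2 / L)) := by gcongr
      _ = _ := by field_simp

/-- Variational form of the Schatten-`2/L` quasi-norm: for `L ≥ 1` and any
matrix `X`, with intermediate dimensions `d_1, …, d_{L−1}` each at least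
`min{m, n}` (where `d_L = m` is the number of rows and `d_0 = n` the number of
columns of `X`), the quantity `‖X‖_{S^{2/L}}^{2/L}` is the attained minimum of
`(1/L)·∑ᵢ ‖Wᵢ‖_F²` over all factorizations `W_L ⋯ W_1 = X`. -/
theorem stmt16 (L : ℕ) (hL : 1 ≤ L) (d : ℕ → ℕ)
    (hdim : ∀ i : ℕ, 1 ≤ i → i ≤ L - 1 → min (d L) (d 0) ≤ d i)
    (X : Matrix (Fin (d L)) (Fin (d 0)) ℝ) :
    IsLeast {c : ℝ | ∃ W : ∀ i : ℕ, Matrix (Fin (d (i + 1))) (Fin (d i)) ℝ,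
        chainProd d W L = X ∧ c = (1 / L : ℝ) * ∑ i : Fin L, frobNorm (W i.1) ^ 2}
      (schattenPow X (2 / L)) := by
  constructor
  · obtain ⟨W, hW, hle⟩ := attain L hL d hdim X
    refine ⟨W, hW, le_antisymm ?_ hle⟩
    rw [← hW]
    exact lower_bound L hL d W
  · rintro c ⟨W, rfl, rfl⟩
    exact lower_bound L hL d W
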